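/- Let p be a prime and let 𝕂 be a complete nontrivially normed field whose norm is ultrametric (‖x + y‖ ≤ max(‖x‖, ‖y‖) for all x, y ∈ 𝕂) and which is a normed ℚ_p-algebra satisfying ‖algebraMap ℚ_p 𝕂 x‖ = ‖x‖ for all x ∈ ℚ_p. Let N¹(ℤ_p, 𝕂) be the set of functions f : ℤ_p → 𝕂 that are strictly differentiable on ℤ_p with identically zero derivative, i.e., for every a ∈ ℤ_p the quotient (f x - f y)/algebraMap ℚ_p 𝕂 ((x : ℚ_p) - (y : ℚ_p)) tends to 0 as (x,y) → (a,a) within {(x,y) ∈ ℤ_p × ℤ_p : x ≠ y}. For α > 0 let Lip_α(ℤ_p, 𝕂) be the set of f : ℤ_p → 𝕂 for which there exists M > 0 with ‖f x - f y‖ ≤ M·‖x - y‖^α for all x, y ∈ ℤ_p (real exponentiation of the norm). Then the set N¹(ℤ_p, 𝕂) \ ⋃_{α > 1} Lip_α(ℤ_p, 𝕂) is 𝔠-lineable in the 𝕂-vector space of all functions ℤ_p → 𝕂: there exists a 𝕂-submodule M of the space of functions ℤ_p → 𝕂 whose rank over 𝕂 equals the cardinality 𝔠 of the continuum and such that M \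 {0} is contained in this set. -/

import Mathlib

/-!
A function `f` on `ℤ_[p]` depending only on `‖x‖` is locally constant away from `0`, and by the
ultrametric inequality it is strictly differentiable with zero derivative as soon as
`f x = o(‖x‖)` at `0`. Prescribing the value `p ^ (n + ⌊log_p n⌋) * c n` on the sphere of valuation
`n` achieves this for every bounded sequence `c`, while an `α`-Hölder bound with `α > 1` would force
`c n → 0`. If `c = b ∘ σ`, where `σ : ℕ → ℕ` has infinite fibres, then `c n → 0` only for `b = 0`.
Hence every nonzero bounded sequence `b` yields a function of the required kind, and the space of
bounded sequences has dimension at least `𝔠`, since the geometric sequences `n ↦ x ^ n` with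
`‖x‖ ≤ 1` are linearly independent (Dedekind).
-/

open Asymptotics Filter Topology
open scoped BoundedContinuousFunction Cardinal

section

theorem linearIndependent_geometric (R : Type*) [CommRing R] [IsDomain R] :
    LinearIndependent R fun (x : R) (n : ℕ) => x ^ n :=
  (linearIndependent_monoidHom (Multiplicative ℕ) R).comp (powersHom R) (powersHom R).injective

theorem mk_closedBall_le_rank_boundedContinuousFunction (𝕂 : Type*) [NormedField 𝕂] :
    #(Metric.closedBall (0 : 𝕂) 1) ≤ Module.rank 𝕂 (ℕ →ᵇ 𝕂) := by
  let geometric (x : Metric.closedBall (0 : 𝕂) 1) : ℕ →ᵇ 𝕂 :=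
    .ofNormedAddCommGroupDiscrete (fun n => (x : 𝕂) ^ n) 1 fun n => by
      simpa using pow_le_one₀ (norm_nonneg _) (mem_closedBall_zero_iff.1 x.2)
  let coeLinear : (ℕ →ᵇ 𝕂) →ₗ[𝕂] ℕ → 𝕂 :=
    { toFun := fun b => b, map_add' := fun _ _ => rfl, map_smul' := fun _ _ => rfl }
  have independent : LinearIndependent 𝕂 geometric :=
    .of_comp coeLinear ((linearIndependent_geometric 𝕂).comp _ Subtype.val_injective)
  exact independent.cardinal_le_rank

theorem continuum_le_rank_boundedContinuousFunction (F 𝕂 : Type*) [NontriviallyNormedField F]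
    [CompleteSpace F] [NormedField 𝕂] [NormedAlgebra F 𝕂] :
    𝔠 ≤ Module.rank 𝕂 (ℕ →ᵇ 𝕂) :=
  calc 𝔠 ≤ #(Metric.ball (0 : 𝕂) 1) :=
        continuum_le_cardinal_of_isOpen F Metric.isOpen_ball (Metric.nonempty_ball.2 one_pos)
    _ ≤ #(Metric.closedBall (0 : 𝕂) 1) := Cardinal.mk_le_mk_of_subset Metric.ball_subset_closedBall
    _ ≤ Module.rank 𝕂 (ℕ →ᵇ 𝕂) := mk_closedBall_le_rank_boundedContinuousFunction 𝕂

theorem exists_submodule_rank_eq {K V : Type*} [Ring K] [StrongRankCondition K]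
    [AddCommGroup V] [Module K V] [Module.Free K V] {c : Cardinal}
    (hc : c ≤ Module.rank K V) : ∃ N : Submodule K V, Module.rank K N = c := by
  obtain ⟨s, rfl, hs⟩ := le_rank_iff_exists_linearIndependent.1 hc
  exact ⟨.span K s, rank_span_set hs⟩

end

section

variable {G E : Type*} [NormedAddCommGroup G] [IsUltrametricDist G]
  [SeminormedAddCommGroup E]

theorem norm_le_norm_sub_of_norm_ne {x y : G} (h : ‖x‖ ≠ ‖y‖) : ‖x‖ ≤ ‖x - y‖ := by
  rw [sub_eq_add_neg, IsUltrametricDist.norm_add_eq_max_of_norm_ne_norm (by rwa [norm_neg])]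
  exact le_max_left _ _

theorem eventually_norm_eq {a : G} (ha : a ≠ 0) : ∀ᶠ x in 𝓝 a, ‖x‖ = ‖a‖ := by
  filter_upwards [Metric.ball_mem_nhds a (norm_pos_iff.2 ha)] with x hx
  rw [mem_ball_iff_norm, sub_eq_add_neg] at hx
  rw [← norm_neg a]
  exact IsUltrametricDist.norm_eq_of_add_norm_lt_max (hx.trans_le (by simp))

theorem isLittleO_sub_sub_of_eq_of_norm_eq {f : G → E} (hf : ∀ x y, ‖x‖ = ‖y‖ → f x = f y)
    (hf₀ : f =o[𝓝 0] fun x => x) (a : G) :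
    (fun q : G × G => f q.1 - f q.2) =o[𝓝 (a, a)] fun q => q.1 - q.2 := by
  rw [nhds_prod_eq]
  rcases eq_or_ne a 0 with rfl | ha
  · refine isLittleO_iff.2 fun ε hε => ?_
    have small := isLittleO_iff.1 hf₀ (half_pos hε)
    filter_upwards [small.prod_mk small] with ⟨x, y⟩ ⟨hx, hy⟩
    by_cases hxy : ‖x‖ = ‖y‖
    · simp only [hf x y hxy, sub_self, norm_zero]
      positivity
    · calc ‖f x - f y‖ ≤ ‖f x‖ + ‖f y‖ := norm_sub_le _ _
        _ ≤ ε / 2 * ‖x‖ + ε / 2 * ‖y‖ := add_le_add hx hy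
        _ ≤ ε / 2 * ‖x - y‖ + ε / 2 * ‖x - y‖ := by
          gcongr
          · exact norm_le_norm_sub_of_norm_ne hxy
          · exact norm_sub_rev x y ▸ norm_le_norm_sub_of_norm_ne (Ne.symm hxy)
        _ = ε * ‖x - y‖ := by ring
  · have eventually_eq : ∀ᶠ q : G × G in 𝓝 a ×ˢ 𝓝 a, 0 = f q.1 - f q.2 := by
      filter_upwards [(eventually_norm_eq ha).prod_mk (eventually_norm_eq ha)] with q ⟨hx, hy⟩
      rw [hf _ _ (hx.trans hy.symm), sub_self]
    exact (isLittleO_zero _ _).congr' eventually_eq .rfl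

end

section

variable {p : ℕ} [Fact p.Prime] {E : Type*}

theorem norm_p_pow_valuation {x : ℤ_[p]} (hx : x ≠ 0) :
    ‖(p : ℚ_[p]) ^ x.valuation‖ = ‖x‖ := by
  rw [Padic.norm_p_pow, PadicInt.norm_eq_zpow_neg_valuation hx]

theorem tendsto_valuation_nhdsNE_zero : Tendsto (PadicInt.valuation (p := p)) (𝓝[≠] 0) atTop := by
  refine tendsto_atTop.2 fun n => ?_
  have hr : 0 < (p : ℝ) ^ (-n : ℤ) := zpow_pos (mod_cast (Fact.out : p.Prime).pos) _
  filter_upwards [nhdsWithin_le_nhds (Metric.closedBall_mem_nhds 0 hr), self_mem_nhdsWithin]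
    with x hx hx₀
  exact (PadicInt.norm_le_pow_iff_le_valuation x hx₀ n).1 (mem_closedBall_zero_iff.1 hx)

open Classical in
/-- The function on `ℤ_[p]` that takes the value `a n` on the sphere of valuation `n`. The point `0`
is treated separately, since `PadicInt.valuation` assigns it the junk value `0`. -/
noncomputable def radial [Zero E] (a : ℕ → E) (x : ℤ_[p]) : E := if x = 0 then 0 else a x.valuation

@[simp]
theorem radial_zero [Zero E] (a : ℕ → E) : radial a (0 : ℤ_[p]) = 0 := if_pos rfl

theorem radial_of_ne_zero [Zero E] (a : ℕ → E) {x : ℤ_[p]} (hx : x ≠ 0) :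
    radial a x = a x.valuation := if_neg hx

@[simp]
theorem radial_p_pow [Zero E] (a : ℕ → E) (n : ℕ) : radial a ((p : ℤ_[p]) ^ n) = a n := by
  rw [radial_of_ne_zero a (pow_ne_zero n PadicInt.prime_p.ne_zero)]
  simp

theorem radial_eq_of_norm_eq [Zero E] (a : ℕ → E) {x y : ℤ_[p]} (h : ‖x‖ = ‖y‖) :
    radial a x = radial a y := by
  rcases eq_or_ne x 0 with rfl | hx
  · rw [norm_zero, eq_comm, norm_eq_zero] at h
    rw [h]
  · have hy : y ≠ 0 := norm_pos_iff.1 (h ▸ norm_pos_iff.2 hx)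
    have hval : x.valuation = y.valuation := by
      rw [PadicInt.norm_eq_zpow_neg_valuation hx, PadicInt.norm_eq_zpow_neg_valuation hy] at h
      have hp : 1 < (p : ℝ) := mod_cast (Fact.out : p.Prime).one_lt
      simpa using zpow_right_injective₀ (by positivity) hp.ne' h
    rw [radial_of_ne_zero a hx, radial_of_ne_zero a hy, hval]

variable [SeminormedAddCommGroup E]

theorem radial_isLittleO {a : ℕ → E} (ha : a =o[atTop] fun n => (p : ℚ_[p]) ^ n) :
    radial a =o[𝓝 0] fun x : ℤ_[p] => x := by
  have punctured : radial a =o[𝓝[≠] 0] fun x : ℤ_[p] => x := by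
    have along_valuation := (ha.comp_tendsto (tendsto_valuation_nhdsNE_zero (p := p))).norm_right
    refine (along_valuation.congr' ?_ ?_).of_norm_right
    · filter_upwards [self_mem_nhdsWithin] with x hx using (radial_of_ne_zero a hx).symm
    · filter_upwards [self_mem_nhdsWithin] with x hx using norm_p_pow_valuation hx
  simpa only [Set.insert_eq, Set.union_compl_self, nhdsWithin_univ] using
    punctured.insert (radial_zero a)

theorem norm_le_of_radial_holder {a : ℕ → E} {C α : ℝ}
    (h : ∀ x y : ℤ_[p], ‖radial a x - radial a y‖ ≤ C * ‖x - y‖ ^ α) (n : ℕ) :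
    ‖a n‖ ≤ C * ‖(p : ℚ_[p]) ^ n‖ ^ α := by
  simpa using h (p ^ n) 0

end

section

variable (p : ℕ) [Fact p.Prime]

/-- The weight `p ^ (n + ⌊log_p n⌋)`, of norm between `p⁻ⁿ / n` and `p⁻ⁿ⁺¹ / n` for `n ≥ 1`. It is
negligible against `pⁿ`, which gives zero derivatives, but dominates `‖pⁿ‖ ^ α` for every `α > 1`,
which excludes Hölder bounds. -/
noncomputable def logWeight (n : ℕ) : ℚ_[p] := (p : ℚ_[p]) ^ (n + Nat.log p n)

theorem logWeight_ne_zero (n : ℕ) : logWeight p n ≠ 0 :=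
  pow_ne_zero _ (mod_cast (Fact.out : p.Prime).ne_zero)

theorem logWeight_isLittleO : logWeight p =o[atTop] fun n => (p : ℚ_[p]) ^ n := by
  have tendsto_log : Tendsto (Nat.log p) atTop atTop :=
    tendsto_atTop.2 fun k => eventually_atTop.2
      ⟨p ^ k, fun n hn => Nat.le_log_of_pow_le (Fact.out : p.Prime).one_lt hn⟩
  have tendsto_p_pow_log : Tendsto (fun n => (p : ℚ_[p]) ^ Nat.log p n) atTop (𝓝 0) :=
    (tendsto_pow_atTop_nhds_zero_of_norm_lt_one Padic.norm_p_lt_one).comp tendsto_log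
  have logWeight_eq : logWeight p = fun n => (p : ℚ_[p]) ^ n * (p : ℚ_[p]) ^ Nat.log p n :=
    funext fun n => pow_add _ _ _
  simpa only [logWeight_eq, mul_one] using
    (isBigO_refl (fun n => (p : ℚ_[p]) ^ n) atTop).mul_isLittleO
      ((isLittleO_one_iff ℚ_[p]).2 tendsto_p_pow_log)

theorem one_le_mul_norm_p_pow_log {n : ℕ} (hn : n ≠ 0) :
    1 ≤ n * ‖(p : ℚ_[p]) ^ Nat.log p n‖ := by
  have hp : 0 < (p : ℝ) := mod_cast (Fact.out : p.Prime).pos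
  rw [Padic.norm_p_pow, zpow_neg, zpow_natCast, ← div_eq_mul_inv, one_le_div (pow_pos hp _)]
  exact_mod_cast Nat.pow_log_le_self p hn

theorem norm_p_pow_rpow_isLittleO_logWeight {α : ℝ} (hα : 1 < α) :
    (fun n => ‖(p : ℚ_[p]) ^ n‖ ^ α) =o[atTop] logWeight p := by
  have hp : 0 < ‖(p : ℚ_[p])‖ := norm_pos_iff.2 (mod_cast (Fact.out : p.Prime).ne_zero)
  set r : ℝ := ‖(p : ℚ_[p])‖ ^ (α - 1) with hr
  have hr₀ : 0 ≤ r := by positivity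
  have hr₁ : r < 1 := Real.rpow_lt_one hp.le Padic.norm_p_lt_one (sub_pos.2 hα)
  have rpow_eq (n : ℕ) : ‖(p : ℚ_[p]) ^ n‖ ^ α = ‖(p : ℚ_[p]) ^ n‖ * r ^ n := by
    rw [norm_pow, hr, Real.rpow_pow_comm hp.le, ← Real.rpow_one_add' (by positivity) (by linarith)]
    ring_nf
  have bound : ∀ᶠ n in atTop,
      ‖‖(p : ℚ_[p]) ^ n‖ ^ α‖ ≤ ‖(n * r ^ n) * ‖logWeight p n‖‖ := by
    filter_upwards [eventually_ne_atTop 0] with n hn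
    rw [Real.norm_of_nonneg (by positivity), Real.norm_of_nonneg (by positivity), rpow_eq]
    calc ‖(p : ℚ_[p]) ^ n‖ * r ^ n
        ≤ ‖(p : ℚ_[p]) ^ n‖ * r ^ n * (n * ‖(p : ℚ_[p]) ^ Nat.log p n‖) :=
          le_mul_of_one_le_right (by positivity) (one_le_mul_norm_p_pow_log p hn)
      _ = n * r ^ n * ‖logWeight p n‖ := by
          rw [logWeight, pow_add, norm_mul]
          ring
  have small : (fun n : ℕ => n * r ^ n) =o[atTop] fun _ => (1 : ℝ) :=
    (isLittleO_one_iff ℝ).2 (tendsto_self_mul_const_pow_of_lt_one hr₀ hr₁)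
  refine (IsBigO.of_bound' bound).trans_isLittleO ?_
  simpa only [one_mul, isLittleO_norm_right] using
    small.mul_isBigO (isBigO_refl (fun n => ‖logWeight p n‖) atTop)

end

section

variable {p : ℕ} [Fact p.Prime] {E : Type*} [NormedAddCommGroup E] [NormedSpace ℚ_[p] E]

/-- The radial function whose value on the sphere of valuation `n` is `logWeight p n • b (σ n)`.
Here `σ n = n.unpair.1` takes every value infinitely often, so that each nonzero value of `b` is
seen on spheres of arbitrarily small radius. -/
noncomputable def slowRadial (b : ℕ → E) : ℤ_[p] → E :=
  radial fun n => logWeight p n • b n.unpair.1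

theorem slowRadial_sub_isLittleO {b : ℕ → E} {C : ℝ} (hb : ∀ k, ‖b k‖ ≤ C) (a : ℤ_[p]) :
    (fun q : ℤ_[p] × ℤ_[p] => slowRadial b q.1 - slowRadial b q.2) =o[𝓝 (a, a)]
      fun q => q.1 - q.2 := by
  have bounded : (fun n : ℕ => b n.unpair.1) =O[atTop] fun _ => (1 : ℚ_[p]) :=
    .of_bound C (.of_forall fun n => by simpa using hb n.unpair.1)
  refine isLittleO_sub_sub_of_eq_of_norm_eq (fun _ _ => radial_eq_of_norm_eq _)
    (radial_isLittleO ?_) a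
  simpa only [smul_eq_mul, mul_one] using (logWeight_isLittleO p).smul_isBigO bounded

theorem frequently_unpair_fst_eq (k : ℕ) : ∃ᶠ n : ℕ in atTop, n.unpair.1 = k :=
  frequently_atTop.2 fun m => ⟨k.pair m, Nat.right_le_pair k m, by rw [Nat.unpair_pair]⟩

theorem slowRadial_not_holder {b : ℕ → E} (hb : b ≠ 0) {α : ℝ} (hα : 1 < α) (C : ℝ) :
    ¬ ∀ x y : ℤ_[p], ‖slowRadial b x - slowRadial b y‖ ≤ C * ‖x - y‖ ^ α := by
  intro holder
  obtain ⟨k, hk⟩ := Function.ne_iff.1 hb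
  have le_rpow : ∃ᶠ n in atTop, ‖b k‖ * ‖logWeight p n‖ ≤ C * ‖(p : ℚ_[p]) ^ n‖ ^ α := by
    refine (frequently_unpair_fst_eq k).mono fun n hn => ?_
    simpa only [hn, norm_smul, mul_comm] using norm_le_of_radial_holder holder n
  have rpow_isLittleO := (norm_p_pow_rpow_isLittleO_logWeight p hα).const_mul_left C
  have rpow_le := isLittleO_iff.1 rpow_isLittleO (half_pos (norm_pos_iff.2 hk))
  obtain ⟨n, h_lower, h_upper⟩ := (le_rpow.and_eventually rpow_le).exists
  have weight_pos : 0 < ‖logWeight p n‖ := norm_pos_iff.2 (logWeight_ne_zero p n)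
  linarith [(Real.le_norm_self _).trans h_upper, mul_pos (norm_pos_iff.2 hk) weight_pos]

end

section

variable {p : ℕ} [Fact p.Prime] {𝕂 : Type*} [NormedField 𝕂] [NormedAlgebra ℚ_[p] 𝕂]

theorem tendsto_div_algebraMap_of_isLittleO {f : ℤ_[p] → 𝕂} {a : ℤ_[p]}
    (hf : (fun q : ℤ_[p] × ℤ_[p] => f q.1 - f q.2) =o[𝓝 (a, a)] fun q => q.1 - q.2) :
    Tendsto (fun q : ℤ_[p] × ℤ_[p] =>
        (f q.1 - f q.2) / algebraMap ℚ_[p] 𝕂 ((q.1 : ℚ_[p]) - (q.2 : ℚ_[p])))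
      (𝓝 (a, a)) (𝓝 0) := by
  have norm_eq (q : ℤ_[p] × ℤ_[p]) :
      ‖q.1 - q.2‖ = ‖algebraMap ℚ_[p] 𝕂 ((q.1 : ℚ_[p]) - (q.2 : ℚ_[p]))‖ := by
    rw [norm_algebraMap', ← PadicInt.coe_sub, PadicInt.padic_norm_e_of_padicInt]
  exact (hf.norm_right.congr_right norm_eq).of_norm_right.tendsto_div_nhds_zero

variable (p 𝕂)

/-- `slowRadial` as a linear map on bounded sequences; its range is the large space of functions
inside which the subspace of dimension `𝔠` is found. Sequences are encoded as bounded continuous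
functions on the discrete space `ℕ`. -/
noncomputable def slowRadialLinearMap : (ℕ →ᵇ 𝕂) →ₗ[𝕂] (ℤ_[p] → 𝕂) where
  toFun b := slowRadial b
  map_add' b c := by
    ext x
    by_cases hx : x = 0 <;> simp [slowRadial, radial, hx]
  map_smul' t b := by
    ext x
    by_cases hx : x = 0 <;> simp [slowRadial, radial, hx]

theorem slowRadialLinearMap_injective : Function.Injective (slowRadialLinearMap p 𝕂) := by
  refine (injective_iff_map_eq_zero _).2 fun b hb => ?_
  by_contra hb₀
  have coe_ne_zero : ⇑b ≠ 0 := fun h => hb₀ (DFunLike.ext' h)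
  have slowRadial_eq_zero : slowRadial b = (0 : ℤ_[p] → 𝕂) := hb
  exact slowRadial_not_holder (p := p) coe_ne_zero one_lt_two 0 (by simp [slowRadial_eq_zero])

end

theorem stmt_2_general (p : ℕ) [Fact p.Prime] (𝕂 : Type*) [NormedField 𝕂]
    [NormedAlgebra ℚ_[p] 𝕂] :
    ∃ M : Submodule 𝕂 (ℤ_[p] → 𝕂),
      Module.rank 𝕂 M = Cardinal.continuum ∧
      ∀ f ∈ (M : Set (ℤ_[p] → 𝕂)), f ≠ 0 →
        (∀ a : ℤ_[p],
          Filter.Tendsto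
            (fun q : ℤ_[p] × ℤ_[p] =>
              (f q.1 - f q.2) / algebraMap ℚ_[p] 𝕂 ((q.1 : ℚ_[p]) - (q.2 : ℚ_[p])))
            (nhdsWithin (a, a) {q : ℤ_[p] × ℤ_[p] | q.1 ≠ q.2}) (nhds 0)) ∧
        ∀ α : ℝ, 1 < α →
          ¬ ∃ C : ℝ, 0 < C ∧ ∀ x y : ℤ_[p], ‖f x - f y‖ ≤ C * ‖x - y‖ ^ α := by
  obtain ⟨N, hN⟩ :=
    exists_submodule_rank_eq (continuum_le_rank_boundedContinuousFunction ℚ_[p] 𝕂)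
  refine ⟨N.map (slowRadialLinearMap p 𝕂), ?_, ?_⟩
  · rw [← hN]
    exact (N.equivMapOfInjective _ (slowRadialLinearMap_injective p 𝕂)).rank_eq.symm
  · rintro _ ⟨b, -, rfl⟩ hb
    have coe_ne_zero : ⇑b ≠ 0 := fun h => hb (by rw [DFunLike.ext' (g := 0) h, map_zero])
    have strict_deriv (a : ℤ_[p]) := slowRadial_sub_isLittleO b.norm_coe_le_norm a
    exact ⟨fun a => (tendsto_div_algebraMap_of_isLittleO (strict_deriv a)).mono_left
        nhdsWithin_le_nhds,
      fun α hα ⟨C, _, hC⟩ => slowRadial_not_holder coe_ne_zero hα C hC⟩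

/-- For a complete nontrivially normed field `𝕂` with ultrametric norm which is
a normed `ℚ_[p]`-algebra with isometric algebra map, the set
`N¹(ℤ_[p], 𝕂) \ ⋃_{α > 1} Lip_α(ℤ_[p], 𝕂)` is `𝔠`-lineable (as a `𝕂`-vector space). -/
theorem stmt_2 (p : ℕ) [Fact p.Prime] (𝕂 : Type) [NontriviallyNormedField 𝕂]
    [CompleteSpace 𝕂] [NormedAlgebra ℚ_[p] 𝕂]
    (hultra : ∀ x y : 𝕂, ‖x + y‖ ≤ max ‖x‖ ‖y‖)
    (hiso : ∀ x : ℚ_[p], ‖algebraMap ℚ_[p] 𝕂 x‖ = ‖x‖) :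
    ∃ M : Submodule 𝕂 (ℤ_[p] → 𝕂),
      Module.rank 𝕂 M = Cardinal.continuum ∧
      ∀ f ∈ (M : Set (ℤ_[p] → 𝕂)), f ≠ 0 →
        (∀ a : ℤ_[p],
          Filter.Tendsto
            (fun q : ℤ_[p] × ℤ_[p] =>
              (f q.1 - f q.2) / algebraMap ℚ_[p] 𝕂 ((q.1 : ℚ_[p]) - (q.2 : ℚ_[p])))
            (nhdsWithin (a, a) {q : ℤ_[p] × ℤ_[p] | q.1 ≠ q.2}) (nhds 0)) ∧
        ∀ α : ℝ, 1 < α →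
          ¬ ∃ C : ℝ, 0 < C ∧ ∀ x y : ℤ_[p], ‖f x - f y‖ ≤ C * ‖x - y‖ ^ α :=
  stmt_2_general p 𝕂
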